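/- For s̃ > 0 and positive integers m, let p_m(s̃) = ∫₀¹ Γ_ic(m, m·s̃·x)/Γ(m) dx, where Γ_ic(a, y) = ∫_y^∞ t^(a−1)·e^(−t) dt. Then, for every fixed s̃ > 0, the sequence m ↦ p_m(s̃) is increasing in m, and lim_{m→∞} p_m(s̃) = min{1, 1/s̃}. -/

import Mathlib

open MeasureTheory Real Filter

/-- The upper incomplete gamma function `Γ_ic(a, y) = ∫_y^∞ t^(a−1) e^(−t) dt`. -/
noncomputable def upperIncompleteGamma (a y : ℝ) : ℝ :=
  ∫ t in Set.Ioi y, t ^ (a - 1) * Real.exp (-t)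

/-- The probability `p_m(s̃) = ∫₀¹ Γ_ic(m, m s̃ x)/Γ(m) dx` that a randomly chosen node
in `[0, a)` can be reached, where `s̃ = a s`. -/
noncomputable def broadcastReachProb (m : ℕ) (st : ℝ) : ℝ :=
  ∫ x in Set.Ioo (0 : ℝ) 1, upperIncompleteGamma m ((m : ℝ) * st * x) / Real.Gamma m

/-!
Let `X_a` be gamma distributed with shape and rate `a`, so that it has mean `1` and variance
`1 / a`. The integrand of `p_a(s)` is the tail probability `P(X_a > s x)`, and integrating it over
`x` gives `p_a(s) = E[min(1, X_a / s)]`, the expectation of a concave function of `X_a`.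

For `a < b` the logarithm of the density ratio of `X_b` and `X_a` is a constant plus
`(b - a) (log x - x)`, which is strictly concave and tends to `-∞` at both ends of `(0, ∞)`. As
neither density can dominate the other, they cross exactly twice, and that of `X_b` is the larger
one between the crossings; since the means agree, this makes the expectation of every concave
non-affine function strictly larger for `X_b` (the cut criterion for the convex order). The limit
holds because `X_a` concentrates at its mean `1` as `a → ∞`.
-/

open ProbabilityTheory

section Secant

variable {S : Set ℝ} {f : ℝ → ℝ} {c p q x : ℝ}

lemma le_of_concaveOn_of_mem_Icc (hf : ConcaveOn ℝ S f) (hp : p ∈ S) (hq : q ∈ S)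
    (hfp : f p = c) (hfq : f q = c) (hx : x ∈ Set.Icc p q) : c ≤ f x := by
  simpa only [hfp, hfq, min_self] using hf.ge_on_segment hp hq (Icc_subset_segment hx)

lemma le_of_concaveOn_of_notMem_Icc (hf : ConcaveOn ℝ S f) (hp : p ∈ S) (hq : q ∈ S)
    (hpq : p < q) (hfp : f p = c) (hfq : f q = c) (hxS : x ∈ S) (hx : x ∉ Set.Icc p q) :
    f x ≤ c := by
  rcases lt_or_ge x p with hxp | hpx
  · exact (hf.left_le_of_le_right'' hxS hq hxp.le hpq (by rw [hfp, hfq])).trans_eq hfp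
  · have hqx : q ≤ x := le_of_not_ge fun hxq => hx ⟨hpx, hxq⟩
    exact (hf.right_le_of_le_left'' hp hxS hpq hqx (by rw [hfp, hfq])).trans_eq hfq

lemma lt_of_strictConcaveOn_of_mem_Ioo (hf : StrictConcaveOn ℝ S f) (hp : p ∈ S) (hq : q ∈ S)
    (hfp : f p = c) (hfq : f q = c) (hx : x ∈ Set.Ioo p q) : c < f x := by
  have hpq : p < q := hx.1.trans hx.2
  simpa only [hfp, hfq, min_self] using
    hf.lt_on_openSegment hp hq hpq.ne (Ioo_subset_openSegment hx)

lemma lt_of_strictConcaveOn_of_notMem_Icc (hf : StrictConcaveOn ℝ S f) (hp : p ∈ S) (hq : q ∈ S)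
    (hpq : p < q) (hfp : f p = c) (hfq : f q = c) (hxS : x ∈ S) (hx : x ∉ Set.Icc p q) :
    f x < c := by
  rcases lt_or_ge x p with hxp | hpx
  · have := hf.lt_on_openSegment hxS hq (hxp.trans hpq).ne (Ioo_subset_openSegment ⟨hxp, hpq⟩)
    simpa [hfp, hfq] using this
  · have hqx : q < x := lt_of_not_ge fun hxq => hx ⟨hpx, hxq⟩
    have := hf.lt_on_openSegment hp hxS (hpq.trans hqx).ne (Ioo_subset_openSegment ⟨hpq, hqx⟩)
    simpa [hfp, hfq] using this

lemma exists_concaveOn_sub_affine_eq_zero (hf : ConcaveOn ℝ S f) (hpq : p < q) :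
    ∃ α β : ℝ, ConcaveOn ℝ S (fun x => f x - (α * x + β)) ∧
      f p - (α * p + β) = 0 ∧ f q - (α * q + β) = 0 := by
  obtain ⟨α, hα⟩ : ∃ α, α * (q - p) = f q - f p :=
    ⟨(f q - f p) / (q - p), div_mul_cancel₀ _ (sub_pos.2 hpq).ne'⟩
  exact ⟨α, f p - α * p, hf.sub (((LinearMap.mul ℝ ℝ α).convexOn hf.1).add_const _),
    by ring, by linarith⟩

end Secant

section ConcaveCut

variable {S : Set ℝ} {φ g : ℝ → ℝ} {p q x : ℝ}

lemma mul_nonneg_of_concaveOn_of_sign_change (hφ : ConcaveOn ℝ S φ) (hp : p ∈ S) (hq : q ∈ S)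
    (hpq : p < q) (hφp : φ p = 0) (hφq : φ q = 0) (hg_pos : ∀ x ∈ Set.Ioo p q, 0 < g x)
    (hg_neg : ∀ x ∈ S \ Set.Icc p q, g x < 0) (hx : x ∈ S) : 0 ≤ φ x * g x := by
  by_cases hxpq : x ∈ Set.Icc p q
  · rcases Set.eq_endpoints_or_mem_Ioo_of_mem_Icc hxpq with rfl | rfl | hx_mid
    · simp [hφp]
    · simp [hφq]
    · exact mul_nonneg (le_of_concaveOn_of_mem_Icc hφ hp hq hφp hφq hxpq) (hg_pos x hx_mid).le
  · exact mul_nonneg_of_nonpos_of_nonpos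
      (le_of_concaveOn_of_notMem_Icc hφ hp hq hpq hφp hφq hx hxpq) (hg_neg x ⟨hx, hxpq⟩).le

lemma eq_zero_of_mul_eq_zero_of_sign_change (hφp : φ p = 0) (hφq : φ q = 0)
    (hg_pos : ∀ x ∈ Set.Ioo p q, 0 < g x) (hg_neg : ∀ x ∈ S \ Set.Icc p q, g x < 0) (hx : x ∈ S)
    (h : φ x * g x = 0) : φ x = 0 := by
  by_cases hxpq : x ∈ Set.Icc p q
  · rcases Set.eq_endpoints_or_mem_Ioo_of_mem_Icc hxpq with rfl | rfl | hx_mid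
    · exact hφp
    · exact hφq
    · exact (mul_eq_zero.1 h).resolve_right (hg_pos x hx_mid).ne'
  · exact (mul_eq_zero.1 h).resolve_right (hg_neg x ⟨hx, hxpq⟩).ne

theorem setIntegral_concave_mul_pos {μ : Measure ℝ} [μ.IsOpenPosMeasure] (hS : IsOpen S)
    (hφ : ConcaveOn ℝ S φ) (hφ_not_affine : ∀ α β : ℝ, ¬ Set.EqOn φ (fun x => α * x + β) S)
    (hp : p ∈ S) (hq : q ∈ S) (hpq : p < q)
    (hg_pos : ∀ x ∈ Set.Ioo p q, 0 < g x) (hg_neg : ∀ x ∈ S \ Set.Icc p q, g x < 0)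
    (hg : IntegrableOn g S μ) (hg₁ : IntegrableOn (fun x => x * g x) S μ)
    (hφg : IntegrableOn (fun x => φ x * g x) S μ)
    (hg_mass : ∫ x in S, g x ∂μ = 0) (hg_mean : ∫ x in S, x * g x ∂μ = 0) :
    0 < ∫ x in S, φ x * g x ∂μ := by
  -- As `g` has zero mass and zero mean, `φ` may be replaced by its difference to its secant on
  -- `[p, q]`, which changes sign exactly where `g` does.
  obtain ⟨α, β, hψ, hψp, hψq⟩ := exists_concaveOn_sub_affine_eq_zero hφ hpq
  have h_eq : ∀ x, (φ x - (α * x + β)) * g x = φ x * g x - (α * (x * g x) + β * g x) :=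
    fun x => by ring
  have h_affine : IntegrableOn (fun x => α * (x * g x) + β * g x) S μ :=
    (hg₁.const_mul α).add (hg.const_mul β)
  have h_int : IntegrableOn (fun x => (φ x - (α * x + β)) * g x) S μ := by
    simp_rw [h_eq]
    exact hφg.sub h_affine
  have h_integral : ∫ x in S, (φ x - (α * x + β)) * g x ∂μ = ∫ x in S, φ x * g x ∂μ := by
    simp_rw [h_eq]
    rw [integral_sub hφg h_affine, integral_add (hg₁.const_mul α) (hg.const_mul β),
      integral_const_mul, integral_const_mul, hg_mass, hg_mean]
    ring
  have h_nonneg : 0 ≤ᵐ[μ.restrict S] fun x => (φ x - (α * x + β)) * g x :=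
    (ae_restrict_mem hS.measurableSet).mono fun x hx =>
      mul_nonneg_of_concaveOn_of_sign_change hψ hp hq hpq hψp hψq hg_pos hg_neg hx
  rw [← h_integral]
  refine (integral_nonneg_of_ae h_nonneg).lt_of_ne' fun h_zero => hφ_not_affine α β ?_
  have h_ae : φ =ᵐ[μ.restrict S] fun x => α * x + β := by
    filter_upwards [(integral_eq_zero_iff_of_nonneg_ae h_nonneg h_int).1 h_zero,
      ae_restrict_mem hS.measurableSet] with x hx hxS
    exact sub_eq_zero.1 (eq_zero_of_mul_eq_zero_of_sign_change (φ := fun x => φ x - (α * x + β))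
      hψp hψq hg_pos hg_neg hxS hx)
  exact Measure.eqOn_open_of_ae_eq h_ae hS (hφ.continuousOn hS) (by fun_prop)

end ConcaveCut

section LogSubSelf

lemma strictConcaveOn_log_sub_self : StrictConcaveOn ℝ (Set.Ioi 0) fun x : ℝ => log x - x :=
  strictConcaveOn_log_Ioi.sub_convexOn (convexOn_id (convex_Ioi 0))

lemma exists_log_sub_self_eq {c : ℝ} (hc : c < -1) :
    ∃ p q : ℝ, 0 < p ∧ p < q ∧ log p - p = c ∧ log q - q = c := by
  have h_cont : ContinuousOn (fun x : ℝ => log x - x) (Set.Ioi 0) :=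
    continuousOn_log.mono (fun x hx => ne_of_gt hx) |>.sub continuousOn_id
  have h_left : log (exp c) - exp c ≤ c := by
    rw [log_exp]
    linarith [exp_pos c]
  have h_right : log (-2 * c) - -2 * c ≤ c := by
    have h_log : log (-2 * c) = log (-c) + log 2 := by
      rw [← log_mul (by linarith) two_ne_zero]
      ring_nf
    linarith [log_le_sub_one_of_pos (show 0 < -c by linarith), log_le_sub_one_of_pos two_pos]
  have h_one : c < log 1 - 1 := by simpa using hc
  obtain ⟨p, hp, hpc⟩ := intermediate_value_Ico (f := fun x => log x - x)
    (exp_le_one_iff.2 (by linarith)) (h_cont.mono fun x hx => (exp_pos c).trans_le hx.1)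
    ⟨h_left, h_one⟩
  obtain ⟨q, hq, hqc⟩ := intermediate_value_Ioc' (f := fun x => log x - x)
    (show 1 ≤ -2 * c by linarith) (h_cont.mono fun x hx => one_pos.trans_le hx.1)
    ⟨h_right, h_one⟩
  exact ⟨p, q, (exp_pos c).trans_le hp.1, hp.2.trans hq.1, hpc, hqc⟩

lemma exists_log_sub_self_crossings {c : ℝ} (hc : c < -1) :
    ∃ p q : ℝ, 0 < p ∧ p < q ∧ (∀ x ∈ Set.Ioo p q, c < log x - x) ∧
      ∀ x ∈ Set.Ioi 0 \ Set.Icc p q, log x - x < c := by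
  obtain ⟨p, q, hp, hpq, hpc, hqc⟩ := exists_log_sub_self_eq hc
  have hq := hp.trans hpq
  exact ⟨p, q, hp, hpq,
    fun x hx => lt_of_strictConcaveOn_of_mem_Ioo (f := fun x => log x - x)
      strictConcaveOn_log_sub_self hp hq hpc hqc hx,
    fun x hx => lt_of_strictConcaveOn_of_notMem_Icc (f := fun x => log x - x)
      strictConcaveOn_log_sub_self hp hq hpq hpc hqc hx.1 hx.2⟩

end LogSubSelf

section GammaMeasure

variable {a r : ℝ}

lemma gammaMeasure_eq_withDensity_restrict_Ioi :
    gammaMeasure a r = (volume.restrict (Set.Ioi 0)).withDensity (gammaPDF a r) := by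
  rw [gammaMeasure, ← withDensity_indicator measurableSet_Ioi]
  refine withDensity_congr_ae ?_
  filter_upwards [Measure.ae_ne volume (0 : ℝ)] with x hx
  rcases hx.lt_or_gt with hx | hx
  · rw [gammaPDF_of_neg hx, Set.indicator_of_notMem (by simpa using hx.le)]
  · rw [Set.indicator_of_mem (by exact hx)]

lemma toReal_gammaPDF (ha : 0 < a) (hr : 0 < r) (x : ℝ) :
    (gammaPDF a r x).toReal = gammaPDFReal a r x :=
  ENNReal.toReal_ofReal (gammaPDFReal_nonneg ha hr x)

lemma measurable_gammaPDF : Measurable (gammaPDF a r) :=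
  (measurable_gammaPDFReal a r).ennreal_ofReal

lemma integral_gammaMeasure (ha : 0 < a) (hr : 0 < r) (φ : ℝ → ℝ) :
    ∫ x, φ x ∂gammaMeasure a r = ∫ x in Set.Ioi 0, φ x * gammaPDFReal a r x := by
  rw [gammaMeasure_eq_withDensity_restrict_Ioi, integral_withDensity_eq_integral_toReal_smul
    measurable_gammaPDF (ae_of_all _ fun _ => ENNReal.ofReal_lt_top)]
  simp only [toReal_gammaPDF ha hr, smul_eq_mul, mul_comm]

lemma integrable_gammaMeasure_iff (ha : 0 < a) (hr : 0 < r) {φ : ℝ → ℝ} :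
    Integrable φ (gammaMeasure a r) ↔
      IntegrableOn (fun x => φ x * gammaPDFReal a r x) (Set.Ioi 0) := by
  rw [gammaMeasure_eq_withDensity_restrict_Ioi, integrable_withDensity_iff_integrable_smul'
    measurable_gammaPDF (ae_of_all _ fun _ => ENNReal.ofReal_lt_top)]
  simp only [toReal_gammaPDF ha hr, smul_eq_mul, mul_comm, IntegrableOn]

lemma ae_pos_gammaMeasure : ∀ᵐ x ∂gammaMeasure a r, 0 < x := by
  rw [gammaMeasure_eq_withDensity_restrict_Ioi]
  exact (withDensity_absolutelyContinuous _ _).ae_le (ae_restrict_mem measurableSet_Ioi)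

lemma integrableOn_gammaPDFReal (ha : 0 < a) (hr : 0 < r) :
    IntegrableOn (gammaPDFReal a r) (Set.Ioi 0) := by
  have := isProbabilityMeasure_gammaMeasure ha hr
  simpa only [one_mul] using (integrable_gammaMeasure_iff ha hr).1 (integrable_const (1 : ℝ))

lemma integral_gammaPDFReal (ha : 0 < a) (hr : 0 < r) :
    ∫ x in Set.Ioi 0, gammaPDFReal a r x = 1 := by
  have := isProbabilityMeasure_gammaMeasure ha hr
  simpa using (integral_gammaMeasure ha hr fun _ => 1).symm

lemma rpow_mul_gammaPDFReal {k : ℝ} (hak : 0 < a + k) (hr : 0 < r) {x : ℝ} (hx : 0 < x) :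
    x ^ k * gammaPDFReal a r x =
      Gamma (a + k) / (Gamma a * r ^ k) * gammaPDFReal (a + k) r x := by
  have hG := (Gamma_pos_of_pos hak).ne'
  have hrk := (rpow_pos_of_pos hr k).ne'
  simp only [gammaPDFReal, if_pos hx.le, rpow_add hr, add_sub_right_comm, rpow_add hx]
  field_simp

lemma integrable_rpow_gammaMeasure {k : ℝ} (ha : 0 < a) (hak : 0 < a + k) (hr : 0 < r) :
    Integrable (fun x => x ^ k) (gammaMeasure a r) := by
  rw [integrable_gammaMeasure_iff ha hr]
  exact IntegrableOn.congr_fun ((integrableOn_gammaPDFReal hak hr).const_mul _)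
    (fun x hx => (rpow_mul_gammaPDFReal hak hr hx).symm) measurableSet_Ioi

lemma integral_rpow_gammaMeasure {k : ℝ} (ha : 0 < a) (hak : 0 < a + k) (hr : 0 < r) :
    ∫ x, x ^ k ∂gammaMeasure a r = Gamma (a + k) / (Gamma a * r ^ k) := by
  rw [integral_gammaMeasure ha hr, setIntegral_congr_fun measurableSet_Ioi
    (fun x hx => rpow_mul_gammaPDFReal hak hr hx), integral_const_mul,
    integral_gammaPDFReal hak hr, mul_one]

lemma integrable_id_gammaMeasure (ha : 0 < a) (hr : 0 < r) :
    Integrable id (gammaMeasure a r) := by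
  simpa only [rpow_one] using! integrable_rpow_gammaMeasure (k := 1) ha (by positivity) hr

lemma integral_id_gammaMeasure (ha : 0 < a) (hr : 0 < r) : ∫ x, id x ∂gammaMeasure a r = a / r := by
  simp only [id]
  have h := integral_rpow_gammaMeasure (k := 1) ha (by positivity) hr
  have hG := (Gamma_pos_of_pos ha).ne'
  simp only [rpow_one, Gamma_add_one ha.ne'] at h
  rw [h]
  field_simp

lemma memLp_two_id_gammaMeasure (ha : 0 < a) (hr : 0 < r) :
    MemLp id 2 (gammaMeasure a r) := by
  refine (memLp_two_iff_integrable_sq aestronglyMeasurable_id).2 ?_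
  simpa only [rpow_two, id] using integrable_rpow_gammaMeasure (k := 2) ha (by positivity) hr

lemma variance_id_gammaMeasure (ha : 0 < a) (hr : 0 < r) :
    Var[id; gammaMeasure a r] = a / r ^ 2 := by
  have := isProbabilityMeasure_gammaMeasure ha hr
  have h := integral_rpow_gammaMeasure (k := 2) ha (by positivity) hr
  rw [← one_add_one_eq_two, ← add_assoc, Gamma_add_one (by positivity), Gamma_add_one ha.ne',
    one_add_one_eq_two] at h
  simp only [rpow_two] at h
  rw [variance_eq_sub (memLp_two_id_gammaMeasure ha hr), integral_id_gammaMeasure ha hr]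
  simp only [Pi.pow_apply, id, h]
  field_simp
  ring

lemma measureReal_gammaMeasure_Ioi (ha : 0 < a) (hr : 0 < r) {y : ℝ} (hy : 0 ≤ y) :
    (gammaMeasure a r).real (Set.Ioi y) = upperIncompleteGamma a (r * y) / Gamma a := by
  have h_subst := integral_comp_mul_left_Ioi (fun t => t ^ (a - 1) * exp (-t)) y hr
  calc (gammaMeasure a r).real (Set.Ioi y)
      = ∫ x in Set.Ioi y, gammaPDFReal a r x := by
        rw [measureReal_def, gammaMeasure, withDensity_apply _ measurableSet_Ioi,
          integral_eq_lintegral_of_nonneg_ae (ae_of_all _ (gammaPDFReal_nonneg ha hr))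
          (by fun_prop)]
        rfl
    _ = ∫ x in Set.Ioi y, r / Gamma a * ((r * x) ^ (a - 1) * exp (-(r * x))) := by
        refine setIntegral_congr_fun measurableSet_Ioi fun x hx => ?_
        have hx₀ : 0 ≤ x := hy.trans (le_of_lt hx)
        simp only [gammaPDFReal, if_pos hx₀, mul_rpow hr.le hx₀, rpow_sub_one hr.ne']
        field_simp
    _ = upperIncompleteGamma a (r * y) / Gamma a := by
        rw [integral_const_mul, h_subst, smul_eq_mul, upperIncompleteGamma]
        field_simp

end GammaMeasure

section NormalizedGamma

variable {a b : ℝ}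

lemma gammaPDFReal_self_eq_exp (ha : 0 < a) {x : ℝ} (hx : 0 < x) :
    gammaPDFReal a a x = x⁻¹ * exp (log (a ^ a / Gamma a) + a * (log x - x)) := by
  have h_exp : exp (a * (log x - x)) = x ^ a * exp (-(a * x)) := by
    rw [rpow_def_of_pos hx, ← exp_add]
    ring_nf
  rw [gammaPDFReal, if_pos hx.le, exp_add, exp_log (by positivity), h_exp, rpow_sub_one hx.ne']
  ring

lemma exists_gammaPDFReal_self_lt_iff (ha : 0 < a) (hab : a < b) :
    ∃ c : ℝ, ∀ x, 0 < x → (gammaPDFReal a a x < gammaPDFReal b b x ↔ c < log x - x) ∧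
      (gammaPDFReal b b x < gammaPDFReal a a x ↔ log x - x < c) := by
  have hba : 0 < b - a := sub_pos.2 hab
  refine ⟨(log (a ^ a / Gamma a) - log (b ^ b / Gamma b)) / (b - a), fun x hx => ?_⟩
  rw [gammaPDFReal_self_eq_exp ha hx, gammaPDFReal_self_eq_exp (ha.trans hab) hx,
    mul_lt_mul_iff_right₀ (inv_pos.2 hx), mul_lt_mul_iff_right₀ (inv_pos.2 hx), exp_lt_exp,
    exp_lt_exp, div_lt_iff₀ hba, lt_div_iff₀ hba]
  constructor <;> constructor <;> intro h <;> linarith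

lemma exists_gammaPDFReal_self_crossings (ha : 0 < a) (hab : a < b) :
    ∃ p q : ℝ, 0 < p ∧ p < q ∧
      (∀ x ∈ Set.Ioo p q, gammaPDFReal a a x < gammaPDFReal b b x) ∧
      ∀ x ∈ Set.Ioi 0 \ Set.Icc p q, gammaPDFReal b b x < gammaPDFReal a a x := by
  have hb := ha.trans hab
  obtain ⟨c, hc⟩ := exists_gammaPDFReal_self_lt_iff ha hab
  have hc_lt : c < -1 := by
    -- Otherwise one density is dominated by the other, although both have total mass one.
    by_contra! hc_ge
    have h_le : gammaPDFReal b b ≤ᵐ[volume.restrict (Set.Ioi 0)] gammaPDFReal a a := by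
      filter_upwards [ae_restrict_mem measurableSet_Ioi] with x hx
      refine le_of_not_gt fun h => ?_
      linarith [(hc x hx).1.1 h, log_le_sub_one_of_pos hx]
    have h_eq := (integral_eq_iff_of_ae_le (integrableOn_gammaPDFReal hb hb)
      (integrableOn_gammaPDFReal ha ha) h_le).1
      (by rw [integral_gammaPDFReal ha ha, integral_gammaPDFReal hb hb])
    have h_ne : ∀ᵐ x ∂volume.restrict (Set.Ioi 0), gammaPDFReal b b x ≠ gammaPDFReal a a x := by
      filter_upwards [ae_restrict_mem measurableSet_Ioi,
        ae_restrict_of_ae (Measure.ae_ne volume (1 : ℝ))] with x hx hx_ne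
      exact ((hc x hx).2.2 (by linarith [log_lt_sub_one_of_pos hx hx_ne])).ne
    have : (ae (volume.restrict (Set.Ioi (0 : ℝ)))).NeBot := ae_restrict_neBot.2 (by simp)
    obtain ⟨x, hx_eq, hx_ne⟩ := (h_eq.and h_ne).exists
    exact hx_ne hx_eq
  obtain ⟨p, q, hp, hpq, h_mid, h_out⟩ := exists_log_sub_self_crossings hc_lt
  exact ⟨p, q, hp, hpq, fun x hx => (hc x (hp.trans hx.1)).1.2 (h_mid x hx),
    fun x hx => (hc x hx.1).2.2 (h_out x hx)⟩

theorem integral_gammaMeasure_self_lt_of_concaveOn {φ : ℝ → ℝ} (ha : 0 < a) (hab : a < b)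
    (hφ : ConcaveOn ℝ (Set.Ioi 0) φ)
    (hφ_not_affine : ∀ α β : ℝ, ¬ Set.EqOn φ (fun x => α * x + β) (Set.Ioi 0))
    (hφa : Integrable φ (gammaMeasure a a)) (hφb : Integrable φ (gammaMeasure b b)) :
    ∫ x, φ x ∂gammaMeasure a a < ∫ x, φ x ∂gammaMeasure b b := by
  have hb := ha.trans hab
  obtain ⟨p, q, hp, hpq, h_pos, h_neg⟩ := exists_gammaPDFReal_self_crossings ha hab
  have h_diff : ∀ {ψ : ℝ → ℝ}, Integrable ψ (gammaMeasure a a) → Integrable ψ (gammaMeasure b b) →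
      IntegrableOn (fun x => ψ x * (gammaPDFReal b b x - gammaPDFReal a a x)) (Set.Ioi 0) ∧
      ∫ x in Set.Ioi 0, ψ x * (gammaPDFReal b b x - gammaPDFReal a a x) =
        ∫ x, ψ x ∂gammaMeasure b b - ∫ x, ψ x ∂gammaMeasure a a := fun hψa hψb => by
    rw [integrable_gammaMeasure_iff ha ha] at hψa
    rw [integrable_gammaMeasure_iff hb hb] at hψb
    simp_rw [mul_sub]
    rw [integral_gammaMeasure ha ha, integral_gammaMeasure hb hb]
    exact ⟨hψb.sub hψa, integral_sub hψb hψa⟩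
  have h_mean := h_diff (integrable_id_gammaMeasure ha ha) (integrable_id_gammaMeasure hb hb)
  rw [integral_id_gammaMeasure ha ha, integral_id_gammaMeasure hb hb, div_self ha.ne',
    div_self hb.ne', sub_self] at h_mean
  have h_mass : ∫ x in Set.Ioi 0, (gammaPDFReal b b x - gammaPDFReal a a x) = 0 := by
    rw [integral_sub (integrableOn_gammaPDFReal hb hb) (integrableOn_gammaPDFReal ha ha),
      integral_gammaPDFReal hb hb, integral_gammaPDFReal ha ha, sub_self]
  have h_conc := h_diff hφa hφb
  rw [← sub_pos, ← h_conc.2]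
  exact setIntegral_concave_mul_pos isOpen_Ioi hφ hφ_not_affine hp (hp.trans hpq) hpq
    (fun x hx => sub_pos.2 (h_pos x hx)) (fun x hx => sub_neg.2 (h_neg x hx))
    ((integrableOn_gammaPDFReal hb hb).sub (integrableOn_gammaPDFReal ha ha))
    h_mean.1 h_conc.1 h_mass h_mean.2

end NormalizedGamma

section MeanOfMin

lemma concaveOn_min_one_div (s : ℝ) : ConcaveOn ℝ (Set.Ioi 0) fun x => min 1 (x / s) :=
  (concaveOn_const 1 (convex_Ioi 0)).inf
    (((LinearMap.mul ℝ ℝ s⁻¹).concaveOn (convex_Ioi 0)).congr fun x _ => inv_mul_eq_div s x)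

lemma not_eqOn_min_one_div_affine {s : ℝ} (hs : 0 < s) (α β : ℝ) :
    ¬ Set.EqOn (fun x => min 1 (x / s)) (fun x => α * x + β) (Set.Ioi 0) := fun h => by
  have h₁ := h (show s / 2 ∈ Set.Ioi 0 from half_pos hs)
  have h₂ := h (show s ∈ Set.Ioi 0 from hs)
  have h₃ := h (show 2 * s ∈ Set.Ioi 0 by simpa using hs)
  have e₁ : s / 2 / s = 1 / 2 := by field_simp
  have e₃ : 2 * s / s = 2 := by field_simp
  norm_num [e₁, e₃, div_self hs.ne'] at h₁ h₂ h₃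
  linarith

lemma integrable_min_one_div {μ : Measure ℝ} (hμ : Integrable id μ) [IsFiniteMeasure μ] (s : ℝ) :
    Integrable (fun x => min 1 (x / s)) μ :=
  (integrable_const 1).inf (hμ.div_const s)

lemma integral_min_one_div_eq_integral_measureReal_Ioi {μ : Measure ℝ} [IsFiniteMeasure μ]
    (hμ : Integrable id μ) (hμ_pos : ∀ᵐ x ∂μ, 0 ≤ x) {s : ℝ} (hs : 0 < s) :
    ∫ x, min 1 (x / s) ∂μ = ∫ t in Set.Ioo 0 1, μ.real (Set.Ioi (s * t)) := by
  have h_nonneg : 0 ≤ᵐ[μ] fun x => min 1 (x / s) :=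
    hμ_pos.mono fun x hx => le_min zero_le_one (div_nonneg hx hs.le)
  have h_tail : ∀ t, μ.real {x | t < min 1 (x / s)} =
      (Set.Iio 1).indicator (fun t => μ.real (Set.Ioi (s * t))) t := fun t => by
    by_cases ht : t < 1
    · simp [ht, lt_div_iff₀' hs, Set.Ioi_def]
    · simp [ht]
  rw [(integrable_min_one_div hμ s).integral_eq_integral_meas_lt h_nonneg]
  simp_rw [h_tail]
  rw [setIntegral_indicator measurableSet_Iio, Set.Ioi_inter_Iio]

lemma lipschitzWith_min_one_div {s : ℝ} (hs : 0 < s) :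
    LipschitzWith (1 / s).toNNReal fun x => min 1 (x / s) := by
  refine (LipschitzWith.of_dist_le_mul fun x y => ?_).const_min 1
  rw [coe_toNNReal _ (by positivity), dist_eq, dist_eq, ← sub_div, abs_div, abs_of_pos hs,
    one_div_mul_eq_div]

theorem abs_integral_comp_sub_le_mul_sqrt_variance {Ω : Type*} [MeasurableSpace Ω]
    {P : Measure Ω} [IsProbabilityMeasure P] {X : Ω → ℝ} (hX : MemLp X 2 P) {K : NNReal}
    {φ : ℝ → ℝ} (hφ : LipschitzWith K φ) :
    |∫ ω, φ (X ω) ∂P - φ (∫ ω, X ω ∂P)| ≤ K * √Var[X; P] := by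
  set m := ∫ ω, X ω ∂P
  have h_dev : MemLp (fun ω => |X ω - m|) 2 P := (hX.sub (memLp_const m)).abs
  have h_dev_int : Integrable (fun ω => |X ω - m|) P := h_dev.integrable one_le_two
  have h_dev_le : ∫ ω, |X ω - m| ∂P ≤ √Var[X; P] := by
    have h_var := variance_nonneg (fun ω => |X ω - m|) P
    rw [variance_eq_sub h_dev] at h_var
    simp only [Pi.pow_apply, sq_abs] at h_var
    rw [variance_eq_integral hX.aemeasurable]
    exact le_sqrt_of_sq_le (sub_nonneg.1 h_var)
  have h_lip : ∀ ω, |φ (X ω) - φ m| ≤ K * |X ω - m| := fun ω => hφ.dist_le_mul (X ω) m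
  have hφX_dev : Integrable (fun ω => φ (X ω) - φ m) P := by
    refine (h_dev_int.const_mul (K : ℝ)).mono' ?_ (ae_of_all _ h_lip)
    exact (hφ.continuous.comp_aestronglyMeasurable hX.1).sub aestronglyMeasurable_const
  have hφX : Integrable (fun ω => φ (X ω)) P :=
    (hφX_dev.add (integrable_const (φ m))).congr (ae_of_all _ fun ω => sub_add_cancel _ _)
  calc |∫ ω, φ (X ω) ∂P - φ m| = |∫ ω, (φ (X ω) - φ m) ∂P| := by
        rw [integral_sub hφX (integrable_const _), integral_const, probReal_univ, one_smul]
    _ ≤ ∫ ω, K * |X ω - m| ∂P := by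
        rw [← norm_eq_abs]
        exact norm_integral_le_of_norm_le (h_dev_int.const_mul _) (ae_of_all _ h_lip)
    _ ≤ K * √Var[X; P] := by
        rw [integral_const_mul]
        gcongr

end MeanOfMin

/-- The reachability probability `p_a(s)` for an arbitrary real Nakagami parameter `a`; at `a = m`
it is `broadcastReachProb m s`. -/
noncomputable def nakagamiReachProb (a s : ℝ) : ℝ :=
  ∫ x in Set.Ioo (0 : ℝ) 1, upperIncompleteGamma a (a * s * x) / Gamma a

lemma nakagamiReachProb_eq_integral_gammaMeasure {a s : ℝ} (ha : 0 < a) (hs : 0 < s) :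
    nakagamiReachProb a s = ∫ x, min 1 (x / s) ∂gammaMeasure a a := by
  have := isProbabilityMeasure_gammaMeasure ha ha
  rw [integral_min_one_div_eq_integral_measureReal_Ioi (integrable_id_gammaMeasure ha ha)
    (ae_pos_gammaMeasure.mono fun _ => le_of_lt) hs]
  refine setIntegral_congr_fun measurableSet_Ioo fun t ht => ?_
  rw [measureReal_gammaMeasure_Ioi ha ha (mul_nonneg hs.le ht.1.le), mul_assoc]

lemma nakagamiReachProb_lt {a b s : ℝ} (ha : 0 < a) (hab : a < b) (hs : 0 < s) :
    nakagamiReachProb a s < nakagamiReachProb b s := by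
  have hb := ha.trans hab
  have := isProbabilityMeasure_gammaMeasure ha ha
  have := isProbabilityMeasure_gammaMeasure hb hb
  rw [nakagamiReachProb_eq_integral_gammaMeasure ha hs,
    nakagamiReachProb_eq_integral_gammaMeasure hb hs]
  exact integral_gammaMeasure_self_lt_of_concaveOn ha hab (concaveOn_min_one_div s)
    (not_eqOn_min_one_div_affine hs) (integrable_min_one_div (integrable_id_gammaMeasure ha ha) s)
    (integrable_min_one_div (integrable_id_gammaMeasure hb hb) s)

lemma abs_nakagamiReachProb_sub_le {a s : ℝ} (ha : 0 < a) (hs : 0 < s) :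
    |nakagamiReachProb a s - min 1 (1 / s)| ≤ 1 / s * √(1 / a) := by
  have := isProbabilityMeasure_gammaMeasure ha ha
  have h := abs_integral_comp_sub_le_mul_sqrt_variance (memLp_two_id_gammaMeasure ha ha)
    (lipschitzWith_min_one_div hs)
  rw [integral_id_gammaMeasure ha ha, variance_id_gammaMeasure ha ha, div_self ha.ne',
    coe_toNNReal _ (by positivity), sq, div_mul_cancel_left₀ ha.ne', ← one_div] at h
  rwa [nakagamiReachProb_eq_integral_gammaMeasure ha hs]

theorem broadcast_reach_prob_monotone_limit_general (s : ℝ) (hs : 0 < s) :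
    StrictMonoOn (fun a : ℝ => nakagamiReachProb a s) (Set.Ioi 0) ∧
    Tendsto (fun a : ℝ => nakagamiReachProb a s) atTop (nhds (min 1 (1 / s))) := by
  refine ⟨fun a ha b _ hab => nakagamiReachProb_lt ha hab hs, ?_⟩
  rw [tendsto_iff_norm_sub_tendsto_zero]
  have h_bound : Tendsto (fun a : ℝ => 1 / s * √(1 / a)) atTop (nhds 0) := by
    have := ((tendsto_const_nhds (x := (1 : ℝ))).div_atTop tendsto_id).sqrt.const_mul (1 / s)
    simpa using this
  refine squeeze_zero' (Eventually.of_forall fun _ => norm_nonneg _) ?_ h_bound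
  filter_upwards [eventually_gt_atTop 0] with a ha using abs_nakagamiReachProb_sub_le ha hs

/-- For every fixed `s̃ > 0`, `m ↦ p_m(s̃)` is increasing in `m` and converges to
`min {1, 1/s̃}` as `m → ∞`. -/
theorem broadcast_reach_prob_monotone_limit (st : ℝ) (hst : 0 < st) :
    StrictMonoOn (fun m : ℕ => broadcastReachProb m st) (Set.Ici 1) ∧
    Tendsto (fun m : ℕ => broadcastReachProb m st) atTop (nhds (min 1 (1 / st))) := by
  obtain ⟨h_mono, h_lim⟩ := broadcast_reach_prob_monotone_limit_general st hst
  exact ⟨h_mono.comp (Nat.strictMono_cast.strictMonoOn _)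
    fun m hm => Set.mem_Ioi.2 (Nat.cast_pos.2 hm),
    h_lim.comp tendsto_natCast_atTop_atTop⟩
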